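/- Let G be a finite graph, let k be a nonnegative integer, let S ⊆ V(G) be such that every connected component D of G − S satisfies |N_G(D)| ≤ k, and let H be the torso of S in G. Let (A,B) be a separation of G of order at most k. Let S_A be a nonempty subset of (A \ B) ∩ S such that H[S_A] is connected, let S_B be a nonempty subset of (B \ A) ∩ S such that H[S_B] is connected, and let C be the set of all touched vertices of S that are not contained in S_A ∪ S_B. If f : S → {1,2,3} satisfies S_A ⊆ f⁻¹(1), C ⊆ f⁻¹(2), and S_B ⊆ f⁻¹(3), then the connected component of H[f⁻¹(1)] containing S_A is completely contained in (A \ B) ∩ S, and the connected component of H[f⁻¹(3)] containing S_B is completely contained in (B \ A) ∩ S. -/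

import Mathlib

/-- A separation of a graph `G`. -/
def IsSeparation {V : Type} (G : SimpleGraph V) (A B : Set V) : Prop :=
  A ∪ B = Set.univ ∧ ∀ u v : V, G.Adj u v → u ∈ A \ B → v ∉ B \ A

/-- `D` is a connected component of the subgraph of `G` induced by `W`. -/
def IsComponentOf {V : Type} (G : SimpleGraph V) (W D : Set V) : Prop :=
  D.Nonempty ∧ D ⊆ W ∧ (G.induce D).Connected ∧
    ∀ u v : V, u ∈ D → v ∈ W → G.Adj u v → v ∈ D

/-- The (open) neighborhood of a vertex set `X` in `G`. -/
def nbhd {V : Type} (G : SimpleGraph V) (X : Set V) : Set V :=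
  {v | v ∉ X ∧ ∃ u ∈ X, G.Adj u v}

/-- The torso of `S` in `G`. -/
def torso {V : Type} (G : SimpleGraph V) (S : Set V) : SimpleGraph V where
  Adj u v := u ≠ v ∧ u ∈ S ∧ v ∈ S ∧
    (G.Adj u v ∨ ∃ D : Set V, IsComponentOf G Sᶜ D ∧ u ∈ nbhd G D ∧ v ∈ nbhd G D)
  symm := by
    constructor
    rintro u v ⟨hne, hu, hv, h | ⟨D, hD, h1, h2⟩⟩
    · exact ⟨hne.symm, hv, hu, Or.inl h.symm⟩
    · exact ⟨hne.symm, hv, hu, Or.inr ⟨D, hD, h2, h1⟩⟩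
  loopless := ⟨fun u h => h.1 rfl⟩

/-- A connected component `D` of `G − S` is touched (w.r.t. a separation `(A,B)`)
if `D ∩ A ∩ B ≠ ∅`. -/
def TouchedComp {V : Type} (G : SimpleGraph V) (S A B D : Set V) : Prop :=
  IsComponentOf G Sᶜ D ∧ (D ∩ (A ∩ B)).Nonempty

/-- A vertex `t ∈ S` is touched if `t ∈ A ∩ B` or `t ∈ N_G(D)` for some touched
component `D`. -/
def TouchedVertex {V : Type} (G : SimpleGraph V) (S A B : Set V) (t : V) : Prop :=
  t ∈ S ∧ (t ∈ A ∩ B ∨ ∃ D : Set V, TouchedComp G S A B D ∧ t ∈ nbhd G D)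

/-!
The set `A \ B` can only be left along an edge into `A ∩ B`. An edge `uv` of the torso with
`u ∈ A \ B` is either an edge of `G` or is routed through a component of `G − S`; if `v` is
untouched, that component avoids `A ∩ B`, hence lies in `A \ B` together with `u`, and so does `v`.
Thus a connected set of the torso that starts in `A \ B` can leave it only at a touched vertex.
The colour of `S_A` occurs on no touched vertex outside `S_A`, so its component never leaves
`A \ B`.
-/

theorem subset_of_preconnected_induce {V : Type*} {G : SimpleGraph V} {D P : Set V}
    (hD : (G.induce D).Preconnected) (hDP : (D ∩ P).Nonempty)
    (hclosed : ∀ u ∈ D ∩ P, ∀ v ∈ D, G.Adj u v → v ∈ P) : D ⊆ P := by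
  obtain ⟨x, hxD, hxP⟩ := hDP
  intro y hyD
  by_contra hyP
  obtain ⟨walk⟩ := hD ⟨x, hxD⟩ ⟨y, hyD⟩
  obtain ⟨d, -, hfst, hsnd⟩ := walk.exists_boundary_dart (Subtype.val ⁻¹' P) hxP hyP
  exact hsnd (hclosed _ ⟨d.fst.2, hfst⟩ _ d.snd.2 d.adj)

section Separation

variable {V : Type} {G : SimpleGraph V} {S A B : Set V}

theorem IsSeparation.symm (hsep : IsSeparation G A B) : IsSeparation G B A :=
  ⟨Set.union_comm A B ▸ hsep.1, fun u v huv hu hv => hsep.2 v u huv.symm hv hu⟩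

theorem IsSeparation.mem_diff_of_adj (hsep : IsSeparation G A B) {u v : V} (huv : G.Adj u v)
    (hu : u ∈ A \ B) (hv : v ∉ A ∩ B) : v ∈ A \ B := by
  have hcover : v ∈ A ∪ B := hsep.1 ▸ Set.mem_univ v
  have hnot : v ∉ B \ A := hsep.2 u v huv hu
  grind

theorem IsSeparation.subset_diff_of_disjoint (hsep : IsSeparation G A B) {D : Set V}
    (hD : (G.induce D).Preconnected) (hdisj : Disjoint D (A ∩ B))
    (hmeet : (D ∩ (A \ B)).Nonempty) : D ⊆ A \ B :=
  subset_of_preconnected_induce hD hmeet fun _ hu _ hv huv =>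
    hsep.mem_diff_of_adj huv hu.2 (hdisj.notMem_of_mem_left hv)

theorem touchedVertex_comm {t : V} : TouchedVertex G S A B t ↔ TouchedVertex G S B A t := by
  simp only [TouchedVertex, TouchedComp, Set.inter_comm A B]

theorem IsSeparation.mem_diff_of_torso_adj (hsep : IsSeparation G A B) {u v : V}
    (huv : (torso G S).Adj u v) (hu : u ∈ A \ B) (hv : ¬ TouchedVertex G S A B v) :
    v ∈ A \ B := by
  obtain ⟨-, -, hvS, hadj⟩ := huv
  have hvAB : v ∉ A ∩ B := fun h => hv ⟨hvS, Or.inl h⟩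
  rcases hadj with hadj | ⟨K, hK, ⟨-, p, hpK, hpu⟩, hvK⟩
  · exact hsep.mem_diff_of_adj hadj hu hvAB
  · have hdisj : Disjoint K (A ∩ B) := Set.disjoint_iff_inter_eq_empty.2 <|
      Set.not_nonempty_iff_eq_empty.1 fun h => hv ⟨hvS, Or.inr ⟨K, ⟨hK, h⟩, hvK⟩⟩
    have hp : p ∈ A \ B :=
      hsep.mem_diff_of_adj hpu.symm hu (hdisj.notMem_of_mem_left hpK)
    have hKA : K ⊆ A \ B :=
      hsep.subset_diff_of_disjoint hK.2.2.1.preconnected hdisj ⟨p, hpK, hp⟩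
    obtain ⟨-, q, hqK, hqv⟩ := hvK
    exact hsep.mem_diff_of_adj hqv (hKA hqK) hvAB

theorem IsSeparation.subset_diff_of_touched (hsep : IsSeparation G A B) {D : Set V}
    (hD : ((torso G S).induce D).Preconnected) (hmeet : (D ∩ (A \ B)).Nonempty)
    (htouched : ∀ v ∈ D, TouchedVertex G S A B v → v ∈ A \ B) : D ⊆ A \ B := by
  refine subset_of_preconnected_induce hD hmeet fun u hu v hv huv => ?_
  by_cases ht : TouchedVertex G S A B v
  · exact htouched v hv ht
  · exact hsep.mem_diff_of_torso_adj huv hu.2 ht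

theorem IsSeparation.monochromatic_component_subset_diff {α : Type*} (hsep : IsSeparation G A B)
    {T D : Set V} (hT : T ⊆ A \ B) (hTne : T.Nonempty) {f : V → α} {c : α}
    (hf : ∀ t, TouchedVertex G S A B t → f t = c → t ∈ T)
    (hD : IsComponentOf (torso G S) (S ∩ f ⁻¹' {c}) D) (hTD : T ⊆ D) : D ⊆ (A \ B) ∩ S := by
  obtain ⟨-, hDc, hconn, -⟩ := hD
  have hmeet : (D ∩ (A \ B)).Nonempty := hTne.mono (Set.subset_inter hTD hT)
  have hDA : D ⊆ A \ B := hsep.subset_diff_of_touched hconn.preconnected hmeet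
    fun v hv ht => hT (hf v ht (hDc hv).2)
  exact Set.subset_inter hDA (hDc.trans Set.inter_subset_left)

theorem component_of_coloring_confined_general {α : Type*} (hsep : IsSeparation G A B)
    {a b c : α} (hab : a ≠ b) (hac : a ≠ c) (hbc : b ≠ c) {SA SB : Set V}
    (hSA : SA ⊆ A \ B) (hSAne : SA.Nonempty) (hSB : SB ⊆ B \ A) (hSBne : SB.Nonempty)
    {f : V → α} (hfA : ∀ v ∈ SA, f v = a)
    (hfC : ∀ t : V, TouchedVertex G S A B t → t ∉ SA ∪ SB → f t = b)
    (hfB : ∀ v ∈ SB, f v = c) :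
    (∀ D : Set V, IsComponentOf (torso G S) (S ∩ f ⁻¹' {a}) D → SA ⊆ D →
        D ⊆ (A \ B) ∩ S) ∧
    (∀ D : Set V, IsComponentOf (torso G S) (S ∩ f ⁻¹' {c}) D → SB ⊆ D →
        D ⊆ (B \ A) ∩ S) := by
  have touched_a : ∀ t, TouchedVertex G S A B t → f t = a → t ∈ SA := by grind
  have touched_c : ∀ t, TouchedVertex G S B A t → f t = c → t ∈ SB := by
    grind [touchedVertex_comm]
  exact ⟨fun _ => hsep.monochromatic_component_subset_diff hSA hSAne touched_a,
    fun _ => hsep.symm.monochromatic_component_subset_diff hSB hSBne touched_c⟩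

end Separation

/-- with `S_A ⊆ (A \ B) ∩ S` nonempty and connected in the torso `H`,
`S_B ⊆ (B \ A) ∩ S` nonempty and connected in `H`, `C` the touched vertices outside
`S_A ∪ S_B`, and `f` a coloring with `S_A ⊆ f⁻¹(1)`, `C ⊆ f⁻¹(2)`, `S_B ⊆ f⁻¹(3)`:
the component of `H[f⁻¹(1)]` containing `S_A` lies in `(A \ B) ∩ S`, and the
component of `H[f⁻¹(3)]` containing `S_B` lies in `(B \ A) ∩ S`. -/
theorem component_of_coloring_confined
    {V : Type} [Fintype V] (G : SimpleGraph V) (k : ℕ)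
    (S : Set V) (hS : ∀ D : Set V, IsComponentOf G Sᶜ D → (nbhd G D).ncard ≤ k)
    (A B : Set V) (hsep : IsSeparation G A B) (hord : (A ∩ B).ncard ≤ k)
    (SA SB : Set V)
    (hSA : SA ⊆ (A \ B) ∩ S) (hSAne : SA.Nonempty)
    (hSAconn : ((torso G S).induce SA).Connected)
    (hSB : SB ⊆ (B \ A) ∩ S) (hSBne : SB.Nonempty)
    (hSBconn : ((torso G S).induce SB).Connected)
    (f : V → ℕ)
    (hfA : ∀ v ∈ SA, f v = 1)
    (hfC : ∀ t : V, TouchedVertex G S A B t → t ∉ SA ∪ SB → f t = 2)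
    (hfB : ∀ v ∈ SB, f v = 3) :
    (∀ D : Set V, IsComponentOf (torso G S) (S ∩ f ⁻¹' {1}) D → SA ⊆ D →
        D ⊆ (A \ B) ∩ S) ∧
    (∀ D : Set V, IsComponentOf (torso G S) (S ∩ f ⁻¹' {3}) D → SB ⊆ D →
        D ⊆ (B \ A) ∩ S) := by
  exact component_of_coloring_confined_general hsep (by simp) (by simp) (by simp)
    (hSA.trans Set.inter_subset_left) hSAne (hSB.trans Set.inter_subset_left) hSBne hfA hfC hfB
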